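/- Let C ⊆ ℝⁿ be a nonempty closed convex set with 0 ∈ C, and let rec(C) := {y ∈ ℝⁿ : x + t·y ∈ C for all x ∈ C and all t ≥ 0} be its recession cone. If {π ∈ ℝⁿ : F(Λ₋(π)) = 0, cπ = 0, ∫_{|u|≤1} ⟨π,u⟩ F(du) ≤ ⟨π,b⟩} ∩ rec(C) = {0}, then ψ attains its infimum over C: there exists π* ∈ C ∩ C₀ such that ψ(π*) ≤ ψ(π) for all π ∈ C. -/

import Mathlib

open MeasureTheory
open scoped RealInnerProductSpace ENNReal Topology

/-- The extended-real-valued convex function `ψ` from the paper: on the budget-constraint set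
`C₀ = {π | F {u | 1 + ⟨π,u⟩ < 0} = 0}` it equals
`−⟨π,b⟩ − ((p−1)/2)⟨π,cπ⟩ − ∫ (p⁻¹((1+⟨π,u⟩)₊)^p − p⁻¹ − ⟨π,u⟩·1_{|u|≤1}) dF`,
and `+∞` outside of `C₀`. -/
noncomputable def psi (n : ℕ) (p : ℝ) (F : Measure (EuclideanSpace ℝ (Fin n)))
    (b : EuclideanSpace ℝ (Fin n))
    (c : EuclideanSpace ℝ (Fin n) →ₗ[ℝ] EuclideanSpace ℝ (Fin n))
    (π : EuclideanSpace ℝ (Fin n)) : EReal :=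
  if F {u : EuclideanSpace ℝ (Fin n) | 1 + ⟪π, u⟫ < 0} = 0 then
    (((-⟪π, b⟫) - ((p - 1) / 2) * ⟪π, c π⟫ -
      ∫ u, (p⁻¹ * (max (1 + ⟪π, u⟫) 0) ^ p - p⁻¹ -
        Set.indicator {u : EuclideanSpace ℝ (Fin n) | ‖u‖ ≤ 1}
          (fun u => ⟪π, u⟫) u) ∂F : ℝ) : EReal)
  else (⊤ : EReal)


lemma aux_scalar (p : ℝ) (hp0 : 0 < p) (hp1 : p < 1) (x : ℝ) :
    |p⁻¹ * (max (1 + x) 0) ^ p - p⁻¹ - x| ≤ (4 * p⁻¹ + 2) * x ^ 2 := by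
  have hpi : 0 < p⁻¹ := inv_pos.mpr hp0
  have hpp : p⁻¹ * p = 1 := inv_mul_cancel₀ hp0.ne'
  rcases le_or_gt (-(1/2)) x with hx | hx
  · have h1 : 0 < 1 + x := by linarith
    rw [max_eq_left h1.le]
    have hup : (1 + x) ^ p ≤ 1 + p * x :=
      rpow_one_add_le_one_add_mul_self (by linarith) hp0.le hp1.le
    have hup2 : (1 + x) ^ (1 - p) ≤ 1 + (1 - p) * x :=
      rpow_one_add_le_one_add_mul_self (by linarith) (by linarith) (by linarith)
    have hmul : (1 + x) ^ p * (1 + x) ^ (1 - p) = 1 + x := by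
      rw [← Real.rpow_add h1]; simp
    have hpos : 0 < (1 + x) ^ p := Real.rpow_pos_of_pos h1 p
    have hd : 1 / 2 ≤ 1 + (1 - p) * x := by nlinarith
    have hlow : 1 + p * x - 2 * p * x ^ 2 ≤ (1 + x) ^ p := by
      have h3 : 1 + x ≤ (1 + x) ^ p * (1 + (1 - p) * x) := by
        nlinarith
      have h4 : (1 + p * x - 2 * p * x ^ 2) * (1 + (1 - p) * x) ≤ 1 + x := by
        have : 0 ≤ p * x ^ 2 := by positivity
        nlinarith
      exact le_of_mul_le_mul_right (h4.trans h3) (by linarith)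
    have e1 := mul_le_mul_of_nonneg_left hup hpi.le
    have e2 := mul_le_mul_of_nonneg_left hlow hpi.le
    have e3 : p⁻¹ * (1 + p * x) = p⁻¹ + x := by rw [mul_add, ← mul_assoc, hpp]; ring
    have e4 : p⁻¹ * (1 + p * x - 2 * p * x ^ 2) = p⁻¹ + x - 2 * x ^ 2 := by
      field_simp
    have : 0 ≤ p⁻¹ * x ^ 2 := by positivity
    rw [abs_le]; constructor <;> nlinarith [sq_nonneg x]
  · have h0 : 0 ≤ (max (1 + x) 0) ^ p := Real.rpow_nonneg (le_max_right _ _) p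
    have h1 : (max (1 + x) 0) ^ p ≤ 1 :=
      Real.rpow_le_one (le_max_right _ _) (max_le (by linarith) (by norm_num)) hp0.le
    have e1 : 0 ≤ p⁻¹ * (max (1 + x) 0) ^ p := by positivity
    have e2 : p⁻¹ * (max (1 + x) 0) ^ p ≤ p⁻¹ := by nlinarith
    have e3 : 1 ≤ 4 * x ^ 2 := by nlinarith
    have e4 : -x ≤ 2 * x ^ 2 := by nlinarith
    have e5 : p⁻¹ ≤ 4 * p⁻¹ * x ^ 2 := by nlinarith
    rw [abs_le]; constructor <;> nlinarith

lemma aux_scalar2 (p : ℝ) (hp0 : 0 < p) (hp1 : p < 1) (x : ℝ) :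
    (max (1 + x) 0) ^ p ≤ 1 + |x| ^ p := by
  calc (max (1 + x) 0) ^ p ≤ (1 + |x|) ^ p := by
        apply Real.rpow_le_rpow (le_max_right _ _) _ hp0.le
        exact max_le (by linarith [le_abs_self x]) (by positivity)
    _ ≤ 1 ^ p + |x| ^ p := Real.rpow_add_le_add_rpow (by norm_num) (abs_nonneg x) hp0.le hp1.le
    _ = _ := by simp

section
variable {E : Type*} [NormedAddCommGroup E] [InnerProductSpace ℝ E]

noncomputable def gg (p : ℝ) (π u : E) : ℝ :=
  p⁻¹ * (max (1 + ⟪π, u⟫) 0) ^ p - p⁻¹ -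
        Set.indicator {u : E | ‖u‖ ≤ 1} (fun u => ⟪π, u⟫) u

noncomputable def HH (p R : ℝ) (u : E) : ℝ :=
  ((4 * p⁻¹ + 2) * R ^ 2) * Set.indicator {u : E | ‖u‖ ≤ 1} (fun u => ‖u‖ ^ 2) u
   + (p⁻¹ * (1 + R ^ p)) * Set.indicator {u : E | 1 < ‖u‖} (fun u => ‖u‖ ^ p) u

lemma gg_bound (p : ℝ) (hp0 : 0 < p) (hp1 : p < 1) (R : ℝ) (π u : E) (hR : ‖π‖ ≤ R) :
    ‖gg p π u‖ ≤ HH p R u := by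
  have hpi : 0 < p⁻¹ := inv_pos.mpr hp0
  have hR0 : 0 ≤ R := (norm_nonneg _).trans hR
  have hx : |⟪π, u⟫| ≤ R * ‖u‖ := (abs_real_inner_le_norm π u).trans (by gcongr)
  unfold gg HH
  rw [Real.norm_eq_abs]
  by_cases hu : ‖u‖ ≤ 1
  · have hu' : ¬ (1 < ‖u‖) := not_lt.mpr hu
    simp only [Set.indicator, Set.mem_ofPred_eq, hu, hu', if_true, if_false, mul_zero, add_zero]
    refine (aux_scalar p hp0 hp1 _).trans ?_
    rw [mul_assoc]
    gcongr
    rw [← mul_pow, ← sq_abs]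
    gcongr
  · have hu' : 1 < ‖u‖ := not_le.mp hu
    simp only [Set.indicator, Set.mem_ofPred_eq, hu, hu', if_true, if_false, mul_zero, zero_add, sub_zero]
    have h0 : 0 ≤ (max (1 + ⟪π, u⟫) 0) ^ p := Real.rpow_nonneg (le_max_right _ _) p
    have h1 := aux_scalar2 p hp0 hp1 ⟪π, u⟫
    have h2 : |⟪π, u⟫| ^ p ≤ R ^ p * ‖u‖ ^ p := by
      rw [← Real.mul_rpow hR0 (norm_nonneg _)]
      exact Real.rpow_le_rpow (abs_nonneg _) hx hp0.le
    have h3 : 1 ≤ ‖u‖ ^ p := Real.one_le_rpow hu'.le hp0.le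
    have h4 : 0 ≤ R ^ p := Real.rpow_nonneg hR0 p
    have : p⁻¹ * (max (1 + ⟪π, u⟫) 0) ^ p - p⁻¹ = p⁻¹ * ((max (1 + ⟪π, u⟫) 0) ^ p - 1) := by ring
    rw [this, abs_mul, abs_of_pos hpi, mul_assoc]
    gcongr
    rw [abs_le]; constructor <;> nlinarith

lemma gg_smul (p : ℝ) (hp0 : 0 < p) (hp1 : p < 1) (s : ℝ) (hs0 : 0 ≤ s) (hs1 : s ≤ 1)
    (π u : E) (h : 0 ≤ 1 + ⟪π, u⟫) : s * gg p π u ≤ gg p (s • π) u := by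
  have hpi : 0 < p⁻¹ := inv_pos.mpr hp0
  have hsx : 0 ≤ 1 + s * ⟪π, u⟫ := by nlinarith
  have hc := (Real.concaveOn_rpow hp0.le hp1.le).2 (x := 1 + ⟪π, u⟫) h (y := 1)
    (by simp) hs0 (sub_nonneg.mpr hs1) (by ring)
  simp only [smul_eq_mul, Real.one_rpow] at hc
  have e : s * (1 + ⟪π, u⟫) + (1 - s) * 1 = 1 + s * ⟪π, u⟫ := by ring
  rw [e] at hc
  have hc2 := mul_le_mul_of_nonneg_left hc hpi.le
  have ei : Set.indicator {u : E | ‖u‖ ≤ 1} (fun u => ⟪s • π, u⟫) u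
      = s * Set.indicator {u : E | ‖u‖ ≤ 1} (fun u => ⟪π, u⟫) u := by
    simp only [Set.indicator, real_inner_smul_left]; split_ifs <;> simp
  unfold gg
  rw [ei, real_inner_smul_left, max_eq_left h, max_eq_left hsx]
  nlinarith

variable [MeasurableSpace E] [BorelSpace E]

lemma int1 (F : Measure E) (hFlevy : ∫⁻ u, ENNReal.ofReal (min (‖u‖ ^ (2 : ℕ)) 1) ∂F ≠ ⊤) :
    Integrable (Set.indicator {u : E | ‖u‖ ≤ 1} (fun u => ‖u‖ ^ 2)) F := by
  have hS : MeasurableSet {u : E | ‖u‖ ≤ 1} := measurableSet_le measurable_norm measurable_const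
  have hi : Integrable (fun u : E => min (‖u‖ ^ (2 : ℕ)) 1) F := by
    refine ⟨by fun_prop, ?_⟩
    rw [hasFiniteIntegral_iff_ofReal (Filter.Eventually.of_forall fun u => by positivity)]
    exact lt_top_iff_ne_top.mpr hFlevy
  refine hi.mono (((measurable_norm.pow_const 2).indicator hS).aestronglyMeasurable) ?_
  refine Filter.Eventually.of_forall fun u => ?_
  simp only [Set.indicator, Set.mem_ofPred_eq]
  split_ifs with h
  · rw [min_eq_left (pow_le_one₀ (norm_nonneg _) h)]
  · simp

lemma int2 (p : ℝ) (F : Measure E) 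
    (hAF : ∫⁻ u in {u : E | 1 < ‖u‖}, ENNReal.ofReal (‖u‖ ^ p) ∂F ≠ ⊤) :
    Integrable (Set.indicator {u : E | 1 < ‖u‖} (fun u => ‖u‖ ^ p)) F := by
  have hS : MeasurableSet {u : E | 1 < ‖u‖} := measurableSet_lt measurable_const measurable_norm
  rw [integrable_indicator_iff hS]
  refine ⟨(measurable_norm.pow_const p).aestronglyMeasurable, ?_⟩
  rw [hasFiniteIntegral_iff_ofReal (Filter.Eventually.of_forall fun u => Real.rpow_nonneg (norm_nonneg _) _)]
  exact lt_top_iff_ne_top.mpr hAF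

lemma HH_int (p R : ℝ) (F : Measure E) 
    (hFlevy : ∫⁻ u, ENNReal.ofReal (min (‖u‖ ^ (2 : ℕ)) 1) ∂F ≠ ⊤)
    (hAF : ∫⁻ u in {u : E | 1 < ‖u‖}, ENNReal.ofReal (‖u‖ ^ p) ∂F ≠ ⊤) :
    Integrable (HH p R : E → ℝ) F :=
  ((int1 F hFlevy).const_mul _).add ((int2 p F hAF).const_mul _)

variable [SecondCountableTopology E]

lemma gg_meas (p : ℝ) (π : E) : Measurable (gg p π) := by
  have hS : MeasurableSet {u : E | ‖u‖ ≤ 1} := measurableSet_le measurable_norm measurable_const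
  have hi : Measurable (fun u : E => ⟪π, u⟫) := by fun_prop
  exact (((((measurable_const.add hi).max measurable_const).pow_const p).const_mul _).sub_const _).sub
    (hi.indicator hS)

lemma gg_int (p : ℝ) (hp0 : 0 < p) (hp1 : p < 1) (F : Measure E) 
    (hFlevy : ∫⁻ u, ENNReal.ofReal (min (‖u‖ ^ (2 : ℕ)) 1) ∂F ≠ ⊤)
    (hAF : ∫⁻ u in {u : E | 1 < ‖u‖}, ENNReal.ofReal (‖u‖ ^ p) ∂F ≠ ⊤) (π : E) :
    Integrable (gg p π) F :=
  (HH_int p ‖π‖ F hFlevy hAF).mono' (gg_meas p π).aestronglyMeasurable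
    (Filter.Eventually.of_forall fun u => gg_bound p hp0 hp1 _ π u le_rfl)

lemma gg_cont (p : ℝ) (hp0 : 0 < p) (hp1 : p < 1) (F : Measure E) 
    (hFlevy : ∫⁻ u, ENNReal.ofReal (min (‖u‖ ^ (2 : ℕ)) 1) ∂F ≠ ⊤)
    (hAF : ∫⁻ u in {u : E | 1 < ‖u‖}, ENNReal.ofReal (‖u‖ ^ p) ∂F ≠ ⊤) :
    Continuous (fun π : E => ∫ u, gg p π u ∂F) := by
  rw [continuous_iff_continuousAt]
  intro π₀
  refine continuousAt_of_dominated (bound := HH p (‖π₀‖ + 1)) ?_ ?_ (HH_int p _ F hFlevy hAF) ?_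
  · exact Filter.Eventually.of_forall fun π => (gg_meas p π).aestronglyMeasurable
  · have : ∀ᶠ π in 𝓝 π₀, ‖π‖ < ‖π₀‖ + 1 :=
      continuous_norm.continuousAt.eventually_lt continuousAt_const (by simp)
    filter_upwards [this] with π hπ
    exact Filter.Eventually.of_forall fun u => gg_bound p hp0 hp1 _ π u hπ.le
  · refine Filter.Eventually.of_forall fun u => Continuous.continuousAt ?_
    unfold gg
    refine Continuous.sub (Continuous.sub (continuous_const.mul ?_) continuous_const) ?_
    · exact Continuous.rpow_const (by fun_prop) (fun _ => Or.inr hp0.le)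
    · simp only [Set.indicator]
      split_ifs <;> fun_prop

lemma gg_on_S (p : ℝ) (hp0 : 0 < p) (hp1 : p < 1) (y u : E) (hu : ‖u‖ ≤ 1)
    (hx : 0 ≤ ⟪y, u⟫) (t : ℝ) (ht : 0 < t) :
    ⟪y, u⟫ - p⁻¹ * t ^ (p - 1) * ⟪y, u⟫ ^ p ≤ t⁻¹ * -gg p (t • y) u ∧
    t⁻¹ * -gg p (t • y) u ≤ ⟪y, u⟫ ∧ 0 ≤ t⁻¹ * -gg p (t • y) u := by
  have hpi : 0 < p⁻¹ := inv_pos.mpr hp0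
  have hti : 0 < t⁻¹ := inv_pos.mpr ht
  set x := ⟪y, u⟫ with hxd
  have htx : 0 ≤ t * x := by positivity
  have hg : gg p (t • y) u = p⁻¹ * (1 + t * x) ^ p - p⁻¹ - t * x := by
    unfold gg
    simp only [Set.indicator, Set.mem_ofPred_eq, hu, if_true, real_inner_smul_left]
    rw [← hxd, max_eq_left (by positivity)]
  have e : t⁻¹ * -gg p (t • y) u = x - p⁻¹ * (t⁻¹ * ((1 + t * x) ^ p - 1)) := by
    rw [hg]; field_simp; ring
  have h1 : 1 ≤ (1 + t * x) ^ p := Real.one_le_rpow (by linarith) hp0.le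
  have h2 : (1 + t * x) ^ p ≤ 1 + t ^ p * x ^ p := by
    have := Real.rpow_add_le_add_rpow (zero_le_one (α := ℝ)) htx hp0.le hp1.le
    rwa [Real.one_rpow, Real.mul_rpow ht.le hx] at this
  have h3 : (1 + t * x) ^ p ≤ 1 + p * (t * x) :=
      rpow_one_add_le_one_add_mul_self (by linarith) hp0.le hp1.le
  have h4 : t ^ (p - 1) = t⁻¹ * t ^ p := by
    rw [Real.rpow_sub_one ht.ne']; ring
  refine ⟨?_, ?_, ?_⟩
  · rw [e, h4]
    have : p⁻¹ * (t⁻¹ * ((1 + t * x) ^ p - 1)) ≤ p⁻¹ * (t⁻¹ * (t ^ p * x ^ p)) := by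
      gcongr; linarith
    linarith
  · rw [e]
    have : 0 ≤ p⁻¹ * (t⁻¹ * ((1 + t * x) ^ p - 1)) := by
      have : 0 ≤ (1 + t * x) ^ p - 1 := by linarith
      positivity
    linarith
  · rw [e]
    have : p⁻¹ * (t⁻¹ * ((1 + t * x) ^ p - 1)) ≤ p⁻¹ * (t⁻¹ * (p * (t * x))) := by
      gcongr; linarith
    have e2 : p⁻¹ * (t⁻¹ * (p * (t * x))) = x := by field_simp
    linarith

lemma gg_off_S (p : ℝ) (hp0 : 0 < p) (hp1 : p < 1) (y u : E) (hu : 1 < ‖u‖)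
    (t : ℝ) (ht : 0 < t) :
    gg p (t • y) u ≤ t ^ p * (p⁻¹ * ‖y‖ ^ p * ‖u‖ ^ p) := by
  have hpi : 0 < p⁻¹ := inv_pos.mpr hp0
  have hu' : ¬ (‖u‖ ≤ 1) := not_le.mpr hu
  unfold gg
  simp only [Set.indicator, Set.mem_ofPred_eq, hu', if_false]
  have h1 := aux_scalar2 p hp0 hp1 ⟪t • y, u⟫
  have h2 : |⟪t • y, u⟫| ^ p ≤ t ^ p * (‖y‖ ^ p * ‖u‖ ^ p) := by
    rw [← Real.mul_rpow (norm_nonneg _) (norm_nonneg _), ← Real.mul_rpow ht.le (by positivity)]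
    refine Real.rpow_le_rpow (abs_nonneg _) ?_ hp0.le
    refine (abs_real_inner_le_norm _ _).trans ?_
    rw [norm_smul, Real.norm_eq_abs, abs_of_pos ht, mul_assoc]
  have := mul_le_mul_of_nonneg_left (h1.trans (add_le_add_right h2 1)) hpi.le
  nlinarith

lemma rec_dir (p : ℝ) (hp0 : 0 < p) (hp1 : p < 1) (F : Measure E) 
    (hFlevy : ∫⁻ u, ENNReal.ofReal (min (‖u‖ ^ (2 : ℕ)) 1) ∂F ≠ ⊤)
    (hAF : ∫⁻ u in {u : E | 1 < ‖u‖}, ENNReal.ofReal (‖u‖ ^ p) ∂F ≠ ⊤)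
    (y : E) (hy : ∀ᵐ u ∂F, 0 ≤ ⟪y, u⟫) (q β : ℝ) (hq : 0 ≤ q)
    (hψ : ∀ t : ℝ, 0 < t →
      -(t * β) - (p - 1) / 2 * (t ^ 2 * q) - ∫ u, gg p (t • y) u ∂F ≤ 0) :
    q = 0 ∧ ((∫⁻ u in {u : E | ‖u‖ ≤ 1}, ENNReal.ofReal ⟪y, u⟫ ∂F : ℝ≥0∞) : EReal)
      ≤ ((β : ℝ) : EReal) := by
  have hS : MeasurableSet {u : E | ‖u‖ ≤ 1} := measurableSet_le measurable_norm measurable_const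
  have hT : MeasurableSet {u : E | 1 < ‖u‖} := measurableSet_lt measurable_const measurable_norm
  have hST : {u : E | ‖u‖ ≤ 1}ᶜ = {u : E | 1 < ‖u‖} := by ext u; simp
  have hgi := gg_int p hp0 hp1 F hFlevy hAF
  obtain ⟨M, hM⟩ : ∃ M, M = ∫ u in {u : E | 1 < ‖u‖}, p⁻¹ * ‖y‖ ^ p * ‖u‖ ^ p ∂F := ⟨_, rfl⟩
  have hyS : ∀ᵐ u ∂(F.restrict {u : E | ‖u‖ ≤ 1}), ‖u‖ ≤ 1 ∧ 0 ≤ ⟪y, u⟫ := by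
    filter_upwards [ae_restrict_mem hS, ae_restrict_of_ae hy] with u h1 h2 using ⟨h1, h2⟩
  -- the key estimate
  have key : ∀ t : ℝ, 0 < t → ∫ u in {u : E | ‖u‖ ≤ 1}, t⁻¹ * -gg p (t • y) u ∂F
      ≤ β + (p - 1) / 2 * (t * q) + t ^ (p - 1) * M := by
    intro t ht
    have h1 := hψ t ht
    have h2 := integral_add_compl hS (hgi (t • y))
    rw [hST] at h2
    have h3 : ∫ u in {u : E | 1 < ‖u‖}, gg p (t • y) u ∂F ≤ t ^ p * M := by
      rw [hM, ← integral_const_mul]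
      refine setIntegral_mono_on (hgi _).integrableOn ?_ hT
        (fun u hu => gg_off_S p hp0 hp1 y u hu t ht)
      exact (((integrable_indicator_iff hT).1 (int2 p F hAF)).const_mul _).const_mul _
    rw [integral_const_mul, integral_neg, Real.rpow_sub_one ht.ne']
    have h4 : -∫ u in {u : E | ‖u‖ ≤ 1}, gg p (t • y) u ∂F ≤
      t * β + (p - 1) / 2 * (t ^ 2 * q) + t ^ p * M := by linarith
    have h5 := mul_le_mul_of_nonneg_left h4 (inv_pos.mpr ht).le
    refine h5.trans (le_of_eq ?_)
    field_simp
  have hnn : ∀ t : ℝ, 0 < t → 0 ≤ᵐ[F.restrict {u : E | ‖u‖ ≤ 1}]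
      fun u => t⁻¹ * -gg p (t • y) u := by
    intro t ht
    filter_upwards [hyS] with u hu using (gg_on_S p hp0 hp1 y u hu.1 hu.2 t ht).2.2
  have key0 : ∀ t : ℝ, 0 < t → 0 ≤ β + (p - 1) / 2 * (t * q) + t ^ (p - 1) * M :=
    fun t ht => (integral_nonneg_of_ae (hnn t ht)).trans (key t ht)
  have lim1 : Filter.Tendsto (fun t : ℝ => t ^ (p - 1)) Filter.atTop (𝓝 0) := by
    have := tendsto_rpow_neg_atTop (y := 1 - p) (by linarith)
    simpa using this
  have hq0 : q = 0 := by
    refine le_antisymm ?_ hq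
    have lim2 : Filter.Tendsto (fun t : ℝ => t⁻¹ * (β + t ^ (p - 1) * M)) Filter.atTop (𝓝 0) := by
      have := tendsto_inv_atTop_zero.mul ((lim1.mul_const M).const_add β)
      simpa using this
    have : (1 - p) / 2 * q ≤ 0 := by
      refine ge_of_tendsto lim2 ?_
      filter_upwards [Filter.eventually_gt_atTop 0] with t ht
      rw [← div_eq_inv_mul, le_div_iff₀ ht]
      have := key0 t ht
      nlinarith
    nlinarith
  refine ⟨hq0, ?_⟩
  subst hq0
  simp only [mul_zero, add_zero] at key key0
  have lim3 : Filter.Tendsto (fun t : ℝ => β + t ^ (p - 1) * M) Filter.atTop (𝓝 β) := by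
    simpa using (lim1.mul_const M).const_add β
  have hβ : 0 ≤ β := by
    refine ge_of_tendsto lim3 ?_
    filter_upwards [Filter.eventually_gt_atTop 0] with t ht using key0 t ht
  have hkt : Filter.Tendsto (fun k : ℕ => (k : ℝ) + 1) Filter.atTop Filter.atTop :=
    Filter.tendsto_atTop_add_const_right _ _ tendsto_natCast_atTop_atTop
  have hkp : ∀ k : ℕ, 0 < (k : ℝ) + 1 := fun k => by positivity
  have fat : ∫⁻ u in {u : E | ‖u‖ ≤ 1}, ENNReal.ofReal ⟪y, u⟫ ∂F ≤ ENNReal.ofReal β := by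
    calc ∫⁻ u in {u : E | ‖u‖ ≤ 1}, ENNReal.ofReal ⟪y, u⟫ ∂F
        = ∫⁻ u in {u : E | ‖u‖ ≤ 1}, Filter.liminf (fun k : ℕ =>
            ENNReal.ofReal (((k : ℝ) + 1)⁻¹ * -gg p (((k : ℝ) + 1) • y) u)) Filter.atTop ∂F := by
          refine lintegral_congr_ae ?_
          filter_upwards [hyS] with u hu
          symm
          refine Filter.Tendsto.liminf_eq ?_
          refine (ENNReal.continuous_ofReal.tendsto _).comp ?_
          refine tendsto_of_tendsto_of_tendsto_of_le_of_le ?_ tendsto_const_nhds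
            (fun k => (gg_on_S p hp0 hp1 y u hu.1 hu.2 _ (hkp k)).1)
            (fun k => (gg_on_S p hp0 hp1 y u hu.1 hu.2 _ (hkp k)).2.1)
          have := (((lim1.comp hkt).const_mul p⁻¹).mul_const (⟪y, u⟫ ^ p)).const_sub ⟪y, u⟫
          simpa using this
      _ ≤ Filter.liminf (fun k : ℕ => ∫⁻ u in {u : E | ‖u‖ ≤ 1},
            ENNReal.ofReal (((k : ℝ) + 1)⁻¹ * -gg p (((k : ℝ) + 1) • y) u) ∂F) Filter.atTop := by
          refine lintegral_liminf_le (fun k => ?_)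
          exact ((gg_meas p _).neg.const_mul _).ennreal_ofReal
      _ ≤ Filter.liminf (fun k : ℕ => ENNReal.ofReal (β + ((k : ℝ) + 1) ^ (p - 1) * M))
            Filter.atTop := by
          refine Filter.liminf_le_liminf (Filter.Eventually.of_forall fun k => ?_)
          rw [← ofReal_integral_eq_lintegral_ofReal _ (hnn _ (hkp k))]
          · exact ENNReal.ofReal_le_ofReal (key _ (hkp k))
          · exact ((hgi _).integrableOn.neg).const_mul _
      _ = ENNReal.ofReal β :=
          ((ENNReal.continuous_ofReal.tendsto _).comp (lim3.comp hkt)).liminf_eq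
  calc ((∫⁻ u in {u : E | ‖u‖ ≤ 1}, ENNReal.ofReal ⟪y, u⟫ ∂F : ℝ≥0∞) : EReal)
      ≤ ((ENNReal.ofReal β : ℝ≥0∞) : EReal) := EReal.coe_ennreal_le_coe_ennreal_iff.mpr fat
    _ = β := by rw [EReal.coe_ennreal_ofReal, max_eq_left hβ]

lemma psd_ker (c : E →ₗ[ℝ] E) (hs : ∀ x y : E, ⟪c x, y⟫ = ⟪x, c y⟫)
    (hp : ∀ x : E, 0 ≤ ⟪x, c x⟫) (y : E) (h : ⟪y, c y⟫ = 0) : c y = 0 := by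
  obtain ⟨K, hK⟩ : ∃ K, K = ⟪c y, c (c y)⟫ := ⟨_, rfl⟩
  obtain ⟨N, hN⟩ : ∃ N, N = ⟪c y, c y⟫ := ⟨_, rfl⟩
  have hK0 : 0 ≤ K := hK ▸ hp _
  have h1 : ∀ a : ℝ, 0 ≤ -2 * a * N + a ^ 2 * K := by
    intro a
    have h2 := hp (y - a • c y)
    rw [map_sub, map_smul, inner_sub_left, inner_sub_right, inner_sub_right, h,
      real_inner_smul_left, real_inner_smul_left, real_inner_smul_right, real_inner_smul_right,
      ← hs y (c y), ← hK, ← hN] at h2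
    linarith
  have h3 := h1 (N / (K + 1))
  have hne : K + 1 ≠ 0 := by positivity
  have h4 : -2 * (N / (K + 1)) * N + (N / (K + 1)) ^ 2 * K = -(N ^ 2 * (K + 2)) / (K + 1) ^ 2 := by
    field_simp; ring
  rw [h4] at h3
  have h5 : N ^ 2 = 0 := by
    by_contra hne'
    have : 0 < N ^ 2 := lt_of_le_of_ne (sq_nonneg _) (Ne.symm hne')
    have : -(N ^ 2 * (K + 2)) / (K + 1) ^ 2 < 0 := by
      apply div_neg_of_neg_of_pos
      · have : 0 < N ^ 2 * (K + 2) := by positivity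
        linarith
      · positivity
    linarith
  have h6 : N = 0 := by simpa using h5
  rw [h6] at hN
  exact inner_self_eq_zero.mp hN.symm
end

/-- Let `C ⊆ ℝⁿ` be a nonempty closed convex set with `0 ∈ C`, with recession
cone `rec(C) = {y | ∀ x ∈ C, ∀ t ≥ 0, x + t·y ∈ C}`. If
`{π | F(Λ₋(π)) = 0, cπ = 0, ∫_{|u|≤1} ⟨π,u⟩ dF ≤ ⟨π,b⟩} ∩ rec(C) = {0}`, then `ψ` attains its
infimum over `C`: there is `π* ∈ C ∩ C₀` with `ψ(π*) ≤ ψ(π)` for all `π ∈ C`. -/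
theorem psi_attains_infimum
    (n : ℕ) (hn : 1 ≤ n) (p : ℝ) (hp0 : 0 < p) (hp1 : p < 1)
    (F : Measure (EuclideanSpace ℝ (Fin n)))
    (hF0 : F {(0 : EuclideanSpace ℝ (Fin n))} = 0)
    (hFlevy : ∫⁻ u, ENNReal.ofReal (min (‖u‖ ^ (2 : ℕ)) 1) ∂F ≠ ⊤)
    (hAF : ∫⁻ u in {u : EuclideanSpace ℝ (Fin n) | 1 < ‖u‖}, ENNReal.ofReal (‖u‖ ^ p) ∂F ≠ ⊤)
    (b : EuclideanSpace ℝ (Fin n))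
    (c : EuclideanSpace ℝ (Fin n) →ₗ[ℝ] EuclideanSpace ℝ (Fin n))
    (hcsymm : ∀ x y : EuclideanSpace ℝ (Fin n), ⟪c x, y⟫ = ⟪x, c y⟫)
    (hcpsd : ∀ x : EuclideanSpace ℝ (Fin n), 0 ≤ ⟪x, c x⟫)
    (C : Set (EuclideanSpace ℝ (Fin n)))
    (hCne : C.Nonempty) (hCcl : IsClosed C) (hCco : Convex ℝ C)
    (h0C : (0 : EuclideanSpace ℝ (Fin n)) ∈ C)
    (hrec : {π : EuclideanSpace ℝ (Fin n) |
        F {u : EuclideanSpace ℝ (Fin n) | ⟪π, u⟫ < 0} = 0 ∧ c π = 0 ∧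
        ((∫⁻ u in {u : EuclideanSpace ℝ (Fin n) | ‖u‖ ≤ 1},
            ENNReal.ofReal ⟪π, u⟫ ∂F : ℝ≥0∞) : EReal) ≤ ((⟪π, b⟫ : ℝ) : EReal)} ∩
      {y : EuclideanSpace ℝ (Fin n) | ∀ x ∈ C, ∀ t : ℝ, 0 ≤ t → x + t • y ∈ C} =
      {0}) :
    ∃ πs : EuclideanSpace ℝ (Fin n),
      πs ∈ C ∧
      F {u : EuclideanSpace ℝ (Fin n) | 1 + ⟪πs, u⟫ < 0} = 0 ∧
      ∀ π ∈ C, psi n p F b c πs ≤ psi n p F b c π := by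
  have hae : ∀ π : EuclideanSpace ℝ (Fin n),
      F {u : EuclideanSpace ℝ (Fin n) | 1 + ⟪π, u⟫ < 0} = 0 ↔ ∀ᵐ u ∂F, 0 ≤ 1 + ⟪π, u⟫ := by
    intro π
    rw [ae_iff]
    simp only [not_le]
  obtain ⟨Ψ, hΨ⟩ : ∃ Ψ : EuclideanSpace ℝ (Fin n) → ℝ, ∀ π, Ψ π =
    (-⟪π, b⟫) - ((p - 1) / 2) * ⟪π, c π⟫ - ∫ u, gg p π u ∂F := ⟨_, fun _ => rfl⟩
  have hpsi : ∀ π, (∀ᵐ u ∂F, 0 ≤ 1 + ⟪π, u⟫) → psi n p F b c π = ((Ψ π : ℝ) : EReal) := by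
    intro π h
    rw [psi, if_pos ((hae π).2 h), hΨ]
    rfl
  have hpsi' : ∀ π, ¬ (∀ᵐ u ∂F, 0 ≤ 1 + ⟪π, u⟫) → psi n p F b c π = ⊤ := by
    intro π h
    rw [psi, if_neg (fun h' => h ((hae π).1 h'))]
  have hcc : Continuous c := c.continuous_of_finiteDimensional
  have hΨc : Continuous Ψ := by
    have : Ψ = fun π => (-⟪π, b⟫) - ((p - 1) / 2) * ⟪π, c π⟫ - ∫ u, gg p π u ∂F := funext hΨ
    rw [this]
    refine Continuous.sub ?_ (gg_cont p hp0 hp1 F hFlevy hAF)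
    fun_prop
  have hΨ0 : Ψ 0 = 0 := by
    rw [hΨ]; simp [gg]
  have hcl0 : IsClosed {π : EuclideanSpace ℝ (Fin n) | ∀ᵐ u ∂F, 0 ≤ 1 + ⟪π, u⟫} := by
    refine IsSeqClosed.isClosed ?_
    intro x π hx hlim
    have hall : ∀ᵐ u ∂F, ∀ k, 0 ≤ 1 + ⟪x k, u⟫ := ae_all_iff.2 hx
    filter_upwards [hall] with u hu
    refine ge_of_tendsto' ((Continuous.tendsto (f := fun z => 1 + ⟪z, u⟫) (by fun_prop) π).comp hlim) hu
  obtain ⟨L, hL⟩ : ∃ L : Set (EuclideanSpace ℝ (Fin n)), L =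
    (C ∩ {π : EuclideanSpace ℝ (Fin n) | ∀ᵐ u ∂F, 0 ≤ 1 + ⟪π, u⟫}) ∩ {π | Ψ π ≤ 0} := ⟨_, rfl⟩
  have hLcl : IsClosed L := by
    rw [hL]; exact (hCcl.inter hcl0).inter (isClosed_le hΨc continuous_const)
  have h0L : (0 : EuclideanSpace ℝ (Fin n)) ∈ L := by
    rw [hL]; exact ⟨⟨h0C, by simp⟩, hΨ0.le⟩
  have hstar : ∀ π ∈ L, ∀ s : ℝ, 0 ≤ s → s ≤ 1 → s • π ∈ L := by
    intro π hπ s hs0 hs1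
    rw [hL] at hπ ⊢
    obtain ⟨⟨h1, h2⟩, h3⟩ := hπ
    have h2' : ∀ᵐ u ∂F, 0 ≤ 1 + ⟪π, u⟫ := h2
    refine ⟨⟨?_, ?_⟩, ?_⟩
    · exact hCco.smul_mem_of_zero_mem h0C h1 ⟨hs0, hs1⟩
    · show ∀ᵐ u ∂F, 0 ≤ 1 + ⟪s • π, u⟫
      filter_upwards [h2'] with u hu
      rw [real_inner_smul_left]
      nlinarith
    · have h3' : Ψ π ≤ 0 := h3
      show Ψ (s • π) ≤ 0
      have hi : s * ∫ u, gg p π u ∂F ≤ ∫ u, gg p (s • π) u ∂F := by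
        rw [← integral_const_mul]
        refine integral_mono_ae ((gg_int p hp0 hp1 F hFlevy hAF π).const_mul s)
          (gg_int p hp0 hp1 F hFlevy hAF _) ?_
        filter_upwards [h2'] with u hu using gg_smul p hp0 hp1 s hs0 hs1 π u hu
      rw [hΨ] at h3' ⊢
      rw [map_smul, real_inner_smul_left, real_inner_smul_left, real_inner_smul_right]
      have e1 := mul_nonneg (mul_nonneg hs0 (sub_nonneg.2 hs1))
        (mul_nonneg (by linarith : 0 ≤ (1 - p) / 2) (hcpsd π))
      have e2 := mul_nonneg hs0 (sub_nonneg.2 h3')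
      nlinarith
  have hLb : Bornology.IsBounded L := by
    by_contra hub
    have hex : ∀ k : ℕ, ∃ π ∈ L, (k : ℝ) < ‖π‖ := by
      intro k
      by_contra! hno
      exact hub ((isBounded_iff_forall_norm_le).2 ⟨k, hno⟩)
    choose x hxL hxk using hex
    have hxpos : ∀ k, 0 < ‖x k‖ := fun k => lt_of_le_of_lt (Nat.cast_nonneg k) (hxk k)
    have hsph : ∀ k, ‖x k‖⁻¹ • x k ∈ Metric.sphere (0 : EuclideanSpace ℝ (Fin n)) 1 := by
      intro k
      rw [mem_sphere_zero_iff_norm, norm_smul, norm_inv, norm_norm,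
        inv_mul_cancel₀ (hxpos k).ne']
    obtain ⟨y, hy, φ, hφ, hlim⟩ := (isCompact_sphere _ _).tendsto_subseq hsph
    have hy1 : ‖y‖ = 1 := mem_sphere_zero_iff_norm.1 hy
    have hnorm : Filter.Tendsto (fun k => ‖x (φ k)‖) Filter.atTop Filter.atTop := by
      refine Filter.tendsto_atTop_mono (fun k => ?_) tendsto_natCast_atTop_atTop
      exact ((Nat.cast_le.2 (hφ.id_le k)).trans (hxk (φ k)).le)
    have hinv : Filter.Tendsto (fun k => ‖x (φ k)‖⁻¹) Filter.atTop (𝓝 0) :=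
      tendsto_inv_atTop_zero.comp hnorm
    have hray : ∀ t : ℝ, 0 ≤ t → t • y ∈ L := by
      intro t ht
      refine hLcl.mem_of_tendsto (hlim.const_smul t) ?_
      filter_upwards [hnorm.eventually_ge_atTop t] with k hk
      simp only [Function.comp]
      rw [smul_smul]
      refine hstar _ (hxL _) _ (mul_nonneg ht (inv_nonneg.2 (norm_nonneg _))) ?_
      rw [← div_eq_mul_inv]
      exact (div_le_one (hxpos _)).2 hk
    rw [hL] at hray
    have hyrec : ∀ z ∈ C, ∀ t : ℝ, 0 ≤ t → z + t • y ∈ C := by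
      intro z hz t ht
      have hl : Filter.Tendsto (fun k => (1 - t * ‖x (φ k)‖⁻¹) • z + (t * ‖x (φ k)‖⁻¹) • x (φ k))
          Filter.atTop (𝓝 (z + t • y)) := by
        have a1 : Filter.Tendsto (fun k => (1 - t * ‖x (φ k)‖⁻¹) • z) Filter.atTop (𝓝 z) := by
          simpa using ((hinv.const_mul t).const_sub 1).smul_const z
        have a2 := hlim.const_smul t
        refine (a1.add a2).congr fun k => ?_
        simp [smul_smul]
      refine hCcl.mem_of_tendsto hl ?_
      filter_upwards [hnorm.eventually_ge_atTop t] with k hk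
      have hxC : x (φ k) ∈ C := by
        have := hxL (φ k)
        rw [hL] at this
        exact this.1.1
      refine hCco hz hxC ?_ (mul_nonneg ht (inv_nonneg.2 (norm_nonneg _))) (by ring)
      rw [← div_eq_mul_inv, sub_nonneg]
      exact (div_le_one (hxpos _)).2 hk
    have hynn : ∀ᵐ u ∂F, 0 ≤ ⟪y, u⟫ := by
      have hall : ∀ᵐ u ∂F, ∀ k : ℕ, 0 ≤ 1 + ⟪(k : ℝ) • y, u⟫ :=
        ae_all_iff.2 fun k => (hray k (Nat.cast_nonneg k)).1.2
      filter_upwards [hall] with u hu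
      by_contra! hneg
      obtain ⟨k, hk⟩ := exists_nat_gt (1 / (-⟪y, u⟫))
      have h1 := hu k
      rw [real_inner_smul_left] at h1
      rw [div_lt_iff₀ (by linarith)] at hk
      linarith
    have hr := rec_dir p hp0 hp1 F hFlevy hAF y hynn ⟪y, c y⟫ ⟪y, b⟫ (hcpsd y) (by
      intro t ht
      have h1 : Ψ (t • y) ≤ 0 := (hray t ht.le).2
      rw [hΨ, map_smul, real_inner_smul_left, real_inner_smul_left, real_inner_smul_right] at h1
      convert h1 using 4
      ring)
    have hmem : y ∈ ({0} : Set (EuclideanSpace ℝ (Fin n))) := by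
      rw [← hrec]
      refine ⟨⟨?_, psd_ker c hcsymm hcpsd y hr.1, hr.2⟩, hyrec⟩
      have := ae_iff.1 hynn
      simpa only [not_le] using this
    have : y = 0 := hmem
    rw [this, norm_zero] at hy1
    exact zero_ne_one hy1
  obtain ⟨πs, hπs, hmin⟩ := (Metric.isCompact_of_isClosed_isBounded hLcl hLb).exists_isMinOn
    ⟨0, h0L⟩ hΨc.continuousOn
  have hπs' := hπs
  rw [hL] at hπs'
  refine ⟨πs, hπs'.1.1, (hae πs).2 hπs'.1.2, ?_⟩
  intro π hπ
  rw [hpsi πs hπs'.1.2]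
  by_cases hπ0 : ∀ᵐ u ∂F, 0 ≤ 1 + ⟪π, u⟫
  · rw [hpsi π hπ0, EReal.coe_le_coe_iff]
    by_cases hle : Ψ π ≤ 0
    · exact hmin (show π ∈ L by rw [hL]; exact ⟨⟨hπ, hπ0⟩, hle⟩)
    · have : Ψ πs ≤ 0 := hπs'.2
      linarith
  · rw [hpsi' π hπ0]; exact le_top
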